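/- Under Hypothesis (hy), the map Θ: B → Λ defined by Θ(λ) = λ if m(λ) ≤ λ and Θ(λ) = m(λ)' if m(λ) > λ is injective. -/

import Mathlib

/-!
Twisting by `φ` and unitriangularity give `conj μ ≤ m μ` for every `μ ∈ B`. Each branch of `Θ` is
injective, since `conj` and `m` are involutions. The images of the two branches are disjoint: a
common value would produce, by applying this inequality once to each argument, a chain of
inequalities contradicting the strict inequality `b < m b` that defines the second branch.
-/

open scoped Classical

/-!
Hypothesis (hy): `𝓗` is a symmetric algebra over an integral domain `A` with a ring
homomorphism `θ : A → L`, `K𝓗` split semisimple with `Irr(K𝓗) = {V^λ : λ ∈ Λ}`, `L𝓗`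
split, together with a unitriangular basic set `(B, ≤, Ψ)` and an algebra involution
`φ ∈ Aut(𝓗)` with `φ² = id`.  We model this combinatorially: `Λ` carries the total order
`≤`, `B ⊆ Λ`, `d l μ` denotes the decomposition number `d_{l, Ψ(μ)}` (for `μ ∈ B`),
`conj : Λ → Λ` is the involution `λ ↦ λ'` with `(V^λ)^φ ≅ V^{λ'}`, and `m : B → B` is the
involution with `Ψ(λ)^φ ≅ Ψ(m λ)`.  The defining properties are: `d μ μ = 1` for `μ ∈ B`,
`d l μ = 0` unless `l ≤ μ`, and `d l μ = d (conj l) (m μ)`.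
-/

/-- Under Hypothesis (hy), the map `Θ : B → Λ` defined by `Θ(λ) = λ` if
`m(λ) ≤ λ` and `Θ(λ) = m(λ)'` if `m(λ) > λ` is injective. -/
theorem theta_injective {Λ : Type*} [LinearOrder Λ] (B : Set Λ)
    (d : Λ → Λ → ℕ) (conj : Λ → Λ) (m : Λ → Λ)
    (hconj : Function.Involutive conj)
    (hmB : ∀ μ ∈ B, m μ ∈ B) (hm : ∀ μ ∈ B, m (m μ) = μ)
    (hone : ∀ μ ∈ B, d μ μ = 1)
    (hzero : ∀ l : Λ, ∀ μ ∈ B, d l μ ≠ 0 → l ≤ μ)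
    (hcompat : ∀ l : Λ, ∀ μ ∈ B, d l μ = d (conj l) (m μ)) :
    Set.InjOn (fun μ => if m μ ≤ μ then μ else conj (m μ)) B := by
  -- Apply `φ` to `d μ μ = 1`: `d (conj μ) (m μ) = 1`, so `conj μ ≤ m μ` by unitriangularity.
  have key : ∀ μ ∈ B, conj μ ≤ m μ := by
    intro μ hμ
    apply hzero _ _ (hmB μ hμ)
    rw [← hcompat μ μ hμ, hone μ hμ]
    exact one_ne_zero
  -- The two branches have disjoint images: `a = conj (m b)` would give
  -- `m b = conj a ≤ m a ≤ a = conj (m b) ≤ m (m b) = b < m b`.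
  have mixed : ∀ a ∈ B, ∀ b ∈ B, m a ≤ a → ¬ m b ≤ b → a ≠ conj (m b) := by
    intro a ha b hb h1 h2 hab
    have h3 : m b ≤ m a := by
      have h := key a ha
      rwa [hab, hconj, ← hab] at h
    have h4 : a ≤ b := by
      have h := key (m b) (hmB b hb)
      rwa [hm b hb, ← hab] at h
    exact h2 (h3.trans (h1.trans h4))
  intro a ha b hb hab
  dsimp only at hab
  split_ifs at hab with h1 h2 h2
  · exact hab
  · exact absurd hab (mixed a ha b hb h1 h2)
  · exact absurd hab.symm (mixed b hb a ha h2 h1)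
  · rw [← hm a ha, ← hm b hb, hconj.injective hab]
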